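/- There exist unique ℂ-linear maps R₊, R₋ on A_C with the stated generator values and twisted Leibniz rule, and for every λ = (λ₊,λ₋) ∈ ℂ² the elements D_m := d_{m0}(λ) ⊗ g_λ (0 ≤ m ≤ p−1) satisfy the recurrences: R₊(D_m) = λ₊·D_{m−1} for 1 ≤ m ≤ p−1, R₋(D_m) = λ₋·D_{m+1} for 0 ≤ m ≤ p−2, R₊(D_0) = λ₊·D_{p−1}, and R₋(D_{p−1}) = λ₋·D_0. -/

import Mathlib

open scoped TensorProduct

noncomputable section

/-- `q = exp(2πi/p)`, a primitive `p`-th root of unity. -/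
def q (p : ℕ) : ℂ := Complex.exp (2 * Real.pi * Complex.I / p)

/-- `q^{1/2} = exp(iπ/p)`. -/
def qh (p : ℕ) : ℂ := Complex.exp (Real.pi * Complex.I / p)

/-- The balanced q-number `[k] = (q^k - q^{-k})/(q - q^{-1})`. -/
def qnum (p k : ℕ) : ℂ := (q p ^ k - (q p)⁻¹ ^ k) / (q p - (q p)⁻¹)

/-- The balanced q-factorial `[k]! = [1][2]⋯[k]`, with `[0]! = 1`. -/
def qfact (p k : ℕ) : ℂ := ∏ j ∈ Finset.range k, qnum p (j + 1)

/-- Generators `η₊, η₋, δ` of the coordinate algebra of `E(1,1|p)`. -/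
inductive Gen : Type
  | ep : Gen
  | em : Gen
  | d : Gen

open FreeAlgebra in
/-- The defining relations of `A(E(1,1|p))`: the two-sided ideal generated by
`η₋η₊ − q²η₊η₋`, `η₊δ − q²δη₊`, `η₋δ − q²δη₋`, `δ^p − 1`, `η₊^p`, `η₋^p`. -/
inductive ERel (p : ℕ) : FreeAlgebra ℂ Gen → FreeAlgebra ℂ Gen → Prop
  | commEta : ERel p (ι ℂ Gen.em * ι ℂ Gen.ep) ((q p ^ 2) • (ι ℂ Gen.ep * ι ℂ Gen.em))
  | commEpD : ERel p (ι ℂ Gen.ep * ι ℂ Gen.d) ((q p ^ 2) • (ι ℂ Gen.d * ι ℂ Gen.ep))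
  | commEmD : ERel p (ι ℂ Gen.em * ι ℂ Gen.d) ((q p ^ 2) • (ι ℂ Gen.d * ι ℂ Gen.em))
  | deltaPow : ERel p (ι ℂ Gen.d ^ p) 1
  | epPow : ERel p (ι ℂ Gen.ep ^ p) 0
  | emPow : ERel p (ι ℂ Gen.em ^ p) 0

/-- The coordinate algebra `A = A(E(1,1|p))` of the reduced quantum Poincaré group. -/
abbrev A (p : ℕ) : Type := RingQuot (ERel p)

/-- `η₊ ∈ A`. -/
def ηp (p : ℕ) : A p := RingQuot.mkAlgHom ℂ (ERel p) (FreeAlgebra.ι ℂ Gen.ep)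

/-- `η₋ ∈ A`. -/
def ηm (p : ℕ) : A p := RingQuot.mkAlgHom ℂ (ERel p) (FreeAlgebra.ι ℂ Gen.em)

/-- `δ ∈ A`. -/
def dl (p : ℕ) : A p := RingQuot.mkAlgHom ℂ (ERel p) (FreeAlgebra.ι ℂ Gen.d)

set_option synthInstance.maxHeartbeats 1000000
set_option maxHeartbeats 1000000

/-- The algebra `C^∞(ℝ², ℂ)` of smooth complex-valued functions on `ℝ²`. -/
def Cinf : Subalgebra ℂ ((ℝ × ℝ) → ℂ) where
  carrier := {f | ContDiff ℝ (⊤ : ℕ∞) f}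
  mul_mem' := fun {a b} (ha : ContDiff ℝ (⊤ : ℕ∞) a) (hb : ContDiff ℝ (⊤ : ℕ∞) b) =>
    ha.mul hb
  one_mem' := by
    change ContDiff ℝ (⊤ : ℕ∞) (fun _ => (1 : ℂ))
    exact contDiff_const
  add_mem' := fun {a b} (ha : ContDiff ℝ (⊤ : ℕ∞) a) (hb : ContDiff ℝ (⊤ : ℕ∞) b) =>
    ha.add hb
  zero_mem' := by
    change ContDiff ℝ (⊤ : ℕ∞) (fun _ => (0 : ℂ))
    exact contDiff_const
  algebraMap_mem' c := by
    change ContDiff ℝ (⊤ : ℕ∞) (fun _ => c)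
    exact contDiff_const

/-- `A_C = A ⊗ C^∞(ℝ², ℂ)`, the coordinate algebra of the quantum plane `E_q^{(1,1)}`
(without support restriction). -/
abbrev AC (p : ℕ) : Type := A p ⊗[ℂ] ↥Cinf

/-- The partial derivative `∂₊ = ∂/∂z₊` on `C^∞(ℝ², ℂ)`. -/
def dPlus (f : ↥Cinf) : ↥Cinf :=
  ⟨fun z => fderiv ℝ (f : (ℝ × ℝ) → ℂ) z (1, 0), by
    have hf : ContDiff ℝ (⊤ : ℕ∞) (f : (ℝ × ℝ) → ℂ) := f.2
    exact (hf.fderiv_right (m := (⊤ : ℕ∞)) (by simp)).clm_apply contDiff_const⟩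

/-- The partial derivative `∂₋ = ∂/∂z₋` on `C^∞(ℝ², ℂ)`. -/
def dMinus (f : ↥Cinf) : ↥Cinf :=
  ⟨fun z => fderiv ℝ (f : (ℝ × ℝ) → ℂ) z (0, 1), by
    have hf : ContDiff ℝ (⊤ : ℕ∞) (f : (ℝ × ℝ) → ℂ) := f.2
    exact (hf.fderiv_right (m := (⊤ : ℕ∞)) (by simp)).clm_apply contDiff_const⟩

/-- The smooth function `exp(i(a z₊ + b z₋))` on `ℝ²`. -/
def expAB (a b : ℂ) : ↥Cinf :=
  ⟨fun z => Complex.exp (Complex.I * (a * z.1 + b * z.2)), by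
    have h1 : ContDiff ℝ (⊤ : ℕ∞) (fun z : ℝ × ℝ => (z.1 : ℂ)) :=
      Complex.ofRealCLM.contDiff.comp contDiff_fst
    have h2 : ContDiff ℝ (⊤ : ℕ∞) (fun z : ℝ × ℝ => (z.2 : ℂ)) :=
      Complex.ofRealCLM.contDiff.comp contDiff_snd
    have h3 : ContDiff ℝ (⊤ : ℕ∞)
        (fun z : ℝ × ℝ => Complex.I * (a * (z.1 : ℂ) + b * (z.2 : ℂ))) :=
      contDiff_const.mul ((contDiff_const.mul h1).add (contDiff_const.mul h2))
    exact h3.cexp⟩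
/-- `ξ = q·η₊η₋ ∈ A`. -/
def xi (p : ℕ) : A p := q p • (ηp p * ηm p)

/-- The cut-off Hahn–Exton q-Bessel function
`𝒥_m(λ²ξ) = Σ_{k=0}^{p−1−m} (−1)^k q^{mk} (λ²)^k ([k]![k+m]!)⁻¹ ξ^k`. -/
def Jq (p : ℕ) (l2 : ℂ) (m : ℕ) : A p :=
  ∑ k ∈ Finset.range (p - m),
    ((-1 : ℂ) ^ k * q p ^ (m * k) * l2 ^ k / (qfact p k * qfact p (k + m))) • xi p ^ k

/-- The matrix element `d_{m0}(λ) = 𝒥_{p−m}(λ²ξ)(−iq^{1/2}λ₋η₋)^{p−m}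
+ (−iq^{−1/2}λ₊η₊)^m 𝒥_m(λ²ξ)`. -/
def dm0 (p : ℕ) (lp lm : ℂ) (m : ℕ) : A p :=
  Jq p (lp * lm) (p - m) * ((-Complex.I * qh p * lm) • ηm p) ^ (p - m) +
    ((-Complex.I * (qh p)⁻¹ * lp) • ηp p) ^ m * Jq p (lp * lm) m

section Scalars

variable {p : ℕ}

theorem q_ne_zero (p : ℕ) : q p ≠ 0 := Complex.exp_ne_zero _

theorem qh_ne_zero (p : ℕ) : qh p ≠ 0 := Complex.exp_ne_zero _

theorem qh_pow (hp : p ≠ 0) : qh p ^ p = -1 := by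
  have : (p : ℂ) ≠ 0 := by exact_mod_cast hp
  rw [qh, ← Complex.exp_nat_mul, mul_div_cancel₀ _ this, Complex.exp_pi_mul_I]

theorem q_isPrimitiveRoot (hp : p ≠ 0) : IsPrimitiveRoot (q p) p :=
  Complex.isPrimitiveRoot_exp p hp

theorem q_pow_ne_inv_pow (hp : Odd p) {k : ℕ} (hk : 0 < k) (hkp : k < p) :
    q p ^ k ≠ (q p)⁻¹ ^ k := by
  intro h
  have h0 := q_ne_zero p
  have h1 : q p ^ (2 * k) = 1 := by
    rw [two_mul, pow_add]
    nth_rewrite 1 [h]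
    rw [← mul_pow, inv_mul_cancel₀ h0, one_pow]
  have h2 := (q_isPrimitiveRoot hp.pos.ne').dvd_of_pow_eq_one _ h1
  have h3 : p ∣ k := (Nat.Coprime.dvd_mul_left (Nat.Coprime.symm (by simpa using hp))).1 h2
  exact absurd (Nat.le_of_dvd hk h3) (by omega)

theorem q_sub_inv_ne_zero (hp : Odd p) (hp3 : 3 ≤ p) : q p - (q p)⁻¹ ≠ 0 := by
  have := q_pow_ne_inv_pow hp one_pos (by omega)
  simpa [sub_eq_zero] using this

theorem qnum_zero (p : ℕ) : qnum p 0 = 0 := by simp [qnum]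

theorem qnum_ne_zero (hp : Odd p) (hp3 : 3 ≤ p) {k : ℕ} (hk : 0 < k) (hkp : k < p) :
    qnum p k ≠ 0 :=
  div_ne_zero (sub_ne_zero.2 (q_pow_ne_inv_pow hp hk hkp)) (q_sub_inv_ne_zero hp hp3)

theorem qnum_self (hp : p ≠ 0) : qnum p p = 0 := by
  simp [qnum, (q_isPrimitiveRoot hp).pow_eq_one]

theorem qnum_succ (hp : Odd p) (hp3 : 3 ≤ p) (k : ℕ) :
    qnum p (k + 1) = q p * qnum p k + (q p)⁻¹ ^ k := by
  have := q_sub_inv_ne_zero hp hp3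
  simp only [qnum]
  rw [div_eq_iff this, add_mul, mul_assoc, div_mul_cancel₀ _ this]
  ring

theorem qnum_succ' (hp : Odd p) (hp3 : 3 ≤ p) (k : ℕ) :
    qnum p (k + 1) = (q p)⁻¹ * qnum p k + (q p)⁻¹⁻¹ ^ k := by
  have := q_sub_inv_ne_zero hp hp3
  simp only [qnum, inv_inv]
  rw [div_eq_iff this, add_mul, mul_assoc, div_mul_cancel₀ _ this]
  ring

theorem qfact_succ (p k : ℕ) : qfact p (k + 1) = qfact p k * qnum p (k + 1) :=
  Finset.prod_range_succ _ _

theorem qfact_ne_zero (hp : Odd p) (hp3 : 3 ≤ p) {k : ℕ} (hkp : k < p) : qfact p k ≠ 0 :=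
  Finset.prod_ne_zero_iff.2 fun j hj =>
    qnum_ne_zero hp hp3 j.succ_pos (by have := Finset.mem_range.1 hj; omega)

theorem neg_I_pow_pred (hp : Odd p) :
    (-Complex.I) ^ (p - 1) = -(-1 : ℂ) ^ ((p + 1) / 2) := by
  obtain ⟨r, rfl⟩ := hp
  have h : (2 * r + 1 + 1) / 2 = r + 1 := by omega
  rw [h, Nat.add_sub_cancel, pow_mul, neg_sq, Complex.I_sq, pow_succ]
  ring

end Scalars

section TwistedDerivation

variable {p : ℕ} {B : Type*} [Ring B] [Algebra ℂ B]

/-- `R` is a twisted derivation with respect to the automorphism `σ`. -/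
def IsTwisted (σ : B ≃ₐ[ℂ] B) (R : B →ₗ[ℂ] B) : Prop :=
  ∀ X Y : B, R (X * Y) = R X * σ Y + σ.symm X * R Y

theorem symm_smul_eq {σ : B ≃ₐ[ℂ] B} {x : B} {r : ℂ} (hr : r ≠ 0) (h : σ x = r • x) :
    σ.symm x = r⁻¹ • x := by
  rw [AlgEquiv.symm_apply_eq, map_smul, h, smul_smul, inv_mul_cancel₀ hr, one_smul]

theorem IsTwisted.map_one {σ : B ≃ₐ[ℂ] B} {R : B →ₗ[ℂ] B} (h : IsTwisted σ R) : R 1 = 0 := by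
  have := h 1 1
  simpa using this

theorem IsTwisted.map_pow_of_zero {σ : B ≃ₐ[ℂ] B} {R : B →ₗ[ℂ] B} (h : IsTwisted σ R) {x : B}
    (hx : R x = 0) (k : ℕ) : R (x ^ k) = 0 := by
  induction k with
  | zero => simpa using h.map_one
  | succ k ih => rw [pow_succ, h, ih, hx]; simp

theorem IsTwisted.map_pow {σ : B ≃ₐ[ℂ] B} {R : B →ₗ[ℂ] B} (h : IsTwisted σ R) {x : B} {r c : ℂ}
    (hr : r ≠ 0) (hσ : σ x = r • x) (hx : R x = c • (1 : B))
    (hn : ∀ k, qnum p (k + 1) = r * qnum p k + r⁻¹ ^ k) (k : ℕ) :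
    R (x ^ (k + 1)) = (c * qnum p (k + 1)) • x ^ k := by
  induction k with
  | zero => simp [hx, hn, qnum_zero]
  | succ k ih =>
    rw [pow_succ x (k + 1), h, ih, hσ, hx, _root_.map_pow, symm_smul_eq hr hσ, smul_pow,
      hn (k + 1)]
    simp only [smul_mul_assoc, mul_smul_comm, smul_smul, ← pow_succ, mul_one, ← add_smul]
    congr 1
    ring

theorem q_comm_pow {x y : B} {t : ℂ} (h : y * x = t • (x * y)) (j k : ℕ) :
    y ^ k * x ^ j = t ^ (j * k) • (x ^ j * y ^ k) := by
  have h1 : ∀ j, y * x ^ j = t ^ j • (x ^ j * y) := by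
    intro j
    induction j with
    | zero => simp
    | succ j ih =>
      rw [pow_succ, ← mul_assoc, ih, smul_mul_assoc, mul_assoc, h, mul_smul_comm, smul_smul,
        mul_assoc, ← pow_succ]
  induction k with
  | zero => simp
  | succ k ih =>
    rw [pow_succ', mul_assoc, ih, mul_smul_comm, ← mul_assoc, h1, smul_mul_assoc, smul_smul,
      mul_assoc, ← pow_add, mul_add, mul_one]

/-- The monomial `q^{jk} a^j b^k ([j]![k]!)⁻¹ x^j y^k`, the building block of `dm0`. -/
def bessTerm (p : ℕ) (a b : ℂ) (x y : B) (j k : ℕ) : B :=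
  (q p ^ (j * k) * a ^ j * b ^ k / (qfact p j * qfact p k)) • (x ^ j * y ^ k)

variable {σ : B ≃ₐ[ℂ] B} {R : B →ₗ[ℂ] B} {x y g : B} {c w l a b : ℂ}

theorem IsTwisted.map_monomial_plus (h : IsTwisted σ R)
    (hσx : σ x = q p • x) (hσy : σ y = (q p)⁻¹ • y) (hσg : σ g = g)
    (hy : R y = 0) (hg : R g = w • (x ^ (p - 1) * g))
    (hyx : y * x = q p ^ 2 • (x * y)) (j k : ℕ) :
    R (x ^ j * y ^ k * g) = R (x ^ j) * ((q p)⁻¹ ^ k • (y ^ k * g)) +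
      (w * ((q p)⁻¹ ^ j * q p ^ k * (q p ^ 2) ^ ((p - 1) * k))) •
        (x ^ (j + (p - 1)) * y ^ k * g) := by
  have h0 := q_ne_zero p
  rw [mul_assoc, h, h, h.map_pow_of_zero hy, hg]
  simp only [_root_.map_mul, _root_.map_pow, hσy, hσg, symm_smul_eq h0 hσx,
    symm_smul_eq (inv_ne_zero h0) hσy, smul_pow, zero_mul, zero_add, smul_mul_assoc,
    mul_smul_comm, smul_smul, inv_inv]
  congr 1
  rw [← mul_assoc (y ^ k), q_comm_pow hyx, smul_mul_assoc, mul_smul_comm, smul_smul, pow_add]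
  simp only [mul_assoc]
  congr 1
  ring

theorem IsTwisted.map_monomial_minus (h : IsTwisted σ R)
    (hσx : σ x = q p • x) (hσy : σ y = (q p)⁻¹ • y) (hσg : σ g = g)
    (hx : R x = 0) (hg : R g = w • (y ^ (p - 1) * g)) (j k : ℕ) :
    R (x ^ j * y ^ k * g) = ((q p)⁻¹ ^ j) • (x ^ j * R (y ^ k) * g) +
      (w * ((q p)⁻¹ ^ j * q p ^ k)) • (x ^ j * y ^ (k + (p - 1)) * g) := by
  have h0 := q_ne_zero p
  rw [mul_assoc, h, h, h.map_pow_of_zero hx, hg]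
  simp only [_root_.map_pow, hσg, symm_smul_eq h0 hσx,
    symm_smul_eq (inv_ne_zero h0) hσy, smul_pow, zero_mul, zero_add, smul_mul_assoc,
    mul_smul_comm, smul_smul, inv_inv, mul_add, pow_add, mul_assoc]
  congr 2
  ring

/-- `R₊` lowers the first index of `bessTerm` cyclically. -/
theorem IsTwisted.map_bessTerm_plus (h : IsTwisted σ R) (hp : Odd p) (hp3 : 3 ≤ p)
    (hσx : σ x = q p • x) (hσy : σ y = (q p)⁻¹ • y) (hσg : σ g = g)
    (hx : R x = c • (1 : B)) (hy : R y = 0) (hg : R g = w • (x ^ (p - 1) * g))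
    (hyx : y * x = q p ^ 2 • (x * y)) (hxp : x ^ p = 0) (hca : a * c = l)
    (hw : w = l * a ^ (p - 1) / qfact p (p - 1)) {j : ℕ} (hj : j < p) (k : ℕ) :
    R (bessTerm p a b x y j k * g) =
      l • (bessTerm p a b x y (if j = 0 then p - 1 else j - 1) k * g) := by
  have h0 := q_ne_zero p
  rw [bessTerm, smul_mul_assoc, map_smul,
    h.map_monomial_plus hσx hσy hσg hy hg hyx]
  rcases j with _ | j
  · have hq : q p ^ k * (q p ^ 2) ^ ((p - 1) * k) = q p ^ ((p - 1) * k) := by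
      obtain ⟨r, rfl⟩ : ∃ r, p = r + 1 := ⟨p - 1, by omega⟩
      have := (q_isPrimitiveRoot hp.pos.ne').pow_eq_one
      rw [Nat.add_sub_cancel, ← pow_mul, ← pow_add,
        show k + 2 * (r * k) = (r + 1) * k + r * k by ring, pow_add, pow_mul, this, one_pow,
        one_mul]
    have hf0 : qfact p 0 = 1 := rfl
    rw [pow_zero x, h.map_one, zero_mul (_ : B), zero_add, if_pos rfl, bessTerm, smul_mul_assoc, smul_smul,
      smul_smul, hw]
    simp only [pow_zero, one_mul, zero_mul, zero_add, mul_one, hf0, mul_assoc] at hq ⊢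
    rw [hq]
    congr 1
    ring
  · have hf := qfact_ne_zero hp hp3 hj
    rw [qfact_succ] at hf
    have hn := right_ne_zero_of_mul hf
    have hf := left_ne_zero_of_mul hf
    have hz : x ^ (j + 1 + (p - 1)) = 0 := by
      rw [show j + 1 + (p - 1) = j + p by omega, pow_add, hxp, mul_zero]
    rw [h.map_pow h0 hσx hx (qnum_succ hp hp3), hz, zero_mul, zero_mul, smul_zero, add_zero,
      if_neg (Nat.succ_ne_zero j), Nat.add_sub_cancel, bessTerm]
    simp only [smul_mul_assoc, mul_smul_comm, smul_smul, mul_assoc]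
    congr 1
    rw [qfact_succ, ← hca, add_mul, one_mul, pow_add, inv_pow]
    field_simp
    ring

/-- `R₋` lowers the second index of `bessTerm` cyclically. -/
theorem IsTwisted.map_bessTerm_minus (h : IsTwisted σ R) (hp : Odd p) (hp3 : 3 ≤ p)
    (hσx : σ x = q p • x) (hσy : σ y = (q p)⁻¹ • y) (hσg : σ g = g)
    (hx : R x = 0) (hy : R y = c • (1 : B)) (hg : R g = w • (y ^ (p - 1) * g))
    (hyp : y ^ p = 0) (hcb : b * c = l)
    (hw : w = l * b ^ (p - 1) / qfact p (p - 1)) (j : ℕ) {k : ℕ} (hk : k < p) :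
    R (bessTerm p a b x y j k * g) =
      l • (bessTerm p a b x y j (if k = 0 then p - 1 else k - 1) * g) := by
  have h0 := q_ne_zero p
  rw [bessTerm, smul_mul_assoc, map_smul,
    h.map_monomial_minus hσx hσy hσg hx hg]
  rcases k with _ | k
  · have hq : (q p)⁻¹ ^ j = q p ^ (j * (p - 1)) := by
      obtain ⟨r, rfl⟩ : ∃ r, p = r + 1 := ⟨p - 1, by omega⟩
      have := (q_isPrimitiveRoot hp.pos.ne').pow_eq_one
      rw [inv_pow]
      apply inv_eq_of_mul_eq_one_right
      rw [← pow_add, Nat.add_sub_cancel, show j + j * r = (r + 1) * j by ring, pow_mul, this, one_pow]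
    have hf0 : qfact p 0 = 1 := rfl
    rw [pow_zero y, h.map_one, mul_zero (_ : B), zero_mul (_ : B), smul_zero, zero_add, if_pos rfl, bessTerm,
      smul_mul_assoc, smul_smul, smul_smul, hw]
    simp only [pow_zero, one_mul, mul_zero, zero_add, mul_one, hf0, hq]
    congr 1
    ring
  · have hf := qfact_ne_zero hp hp3 hk
    rw [qfact_succ] at hf
    have hn := right_ne_zero_of_mul hf
    have hf := left_ne_zero_of_mul hf
    have hz : y ^ (k + 1 + (p - 1)) = 0 := by
      rw [show k + 1 + (p - 1) = k + p by omega, pow_add, hyp, mul_zero]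
    rw [h.map_pow (inv_ne_zero h0) hσy hy (qnum_succ' hp hp3), hz, mul_zero, zero_mul, smul_zero,
      add_zero, if_neg (Nat.succ_ne_zero k), Nat.add_sub_cancel, bessTerm]
    simp only [smul_mul_assoc, mul_smul_comm, smul_smul, mul_assoc]
    congr 1
    rw [qfact_succ, ← hcb, mul_add, mul_one, pow_add, inv_pow]
    field_simp
    ring

theorem ZMod.val_sub_one_eq [NeZero p] (j : ZMod p) :
    (j - 1).val = if j.val = 0 then p - 1 else j.val - 1 := by
  obtain ⟨r, rfl⟩ : ∃ r, p = r + 1 := ⟨p - 1, by have := NeZero.ne p; omega⟩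
  split_ifs with hj
  · rw [ZMod.val_eq_zero] at hj
    subst hj
    rw [zero_sub, ZMod.val_neg_one, Nat.add_sub_cancel]
  · have hj' := ZMod.val_lt j
    have : j - 1 = ((j.val - 1 : ℕ) : ZMod (r + 1)) := by
      rw [Nat.cast_sub (by omega), ZMod.natCast_zmod_val, Nat.cast_one]
    rw [this, ZMod.val_natCast_of_lt (by omega)]

/-- The sum of all `bessTerm`s whose indices differ by `m` modulo `p`. -/
def bessSum (p : ℕ) [NeZero p] (a b : ℂ) (x y : B) (m : ZMod p) : B :=
  ∑ j : ZMod p, bessTerm p a b x y j.val (j - m).val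

theorem IsTwisted.map_bessSum_plus [NeZero p] (h : IsTwisted σ R) (hp : Odd p) (hp3 : 3 ≤ p)
    (hσx : σ x = q p • x) (hσy : σ y = (q p)⁻¹ • y) (hσg : σ g = g)
    (hx : R x = c • (1 : B)) (hy : R y = 0) (hg : R g = w • (x ^ (p - 1) * g))
    (hyx : y * x = q p ^ 2 • (x * y)) (hxp : x ^ p = 0) (hca : a * c = l)
    (hw : w = l * a ^ (p - 1) / qfact p (p - 1)) (m : ZMod p) :
    R (bessSum p a b x y m * g) = l • (bessSum p a b x y (m - 1) * g) := by
  rw [bessSum, bessSum, Finset.sum_mul, Finset.sum_mul, map_sum, Finset.smul_sum,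
    ← Equiv.sum_comp (Equiv.subRight (1 : ZMod p))
      fun j => l • (bessTerm p a b x y j.val (j - (m - 1)).val * g)]
  refine Finset.sum_congr rfl fun j _ => ?_
  rw [h.map_bessTerm_plus hp hp3 hσx hσy hσg hx hy hg hyx hxp hca hw j.val_lt,
    Equiv.subRight_apply, ← ZMod.val_sub_one_eq, sub_sub_sub_cancel_right]

theorem IsTwisted.map_bessSum_minus [NeZero p] (h : IsTwisted σ R) (hp : Odd p) (hp3 : 3 ≤ p)
    (hσx : σ x = q p • x) (hσy : σ y = (q p)⁻¹ • y) (hσg : σ g = g)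
    (hx : R x = 0) (hy : R y = c • (1 : B)) (hg : R g = w • (y ^ (p - 1) * g))
    (hyp : y ^ p = 0) (hcb : b * c = l)
    (hw : w = l * b ^ (p - 1) / qfact p (p - 1)) (m : ZMod p) :
    R (bessSum p a b x y m * g) = l • (bessSum p a b x y (m + 1) * g) := by
  rw [bessSum, bessSum, Finset.sum_mul, Finset.sum_mul, map_sum, Finset.smul_sum]
  refine Finset.sum_congr rfl fun j _ => ?_
  rw [h.map_bessTerm_minus hp hp3 hσx hσy hσg hx hy hg hyp hcb hw _ (ZMod.val_lt _),
    ← ZMod.val_sub_one_eq, sub_sub]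

theorem bessSum_eq [NeZero p] (a b : ℂ) (x y : B) {m : ℕ} (hm : m < p) :
    bessSum p a b x y m = ∑ k ∈ Finset.range m, bessTerm p a b x y k (k + (p - m)) +
      ∑ k ∈ Finset.range (p - m), bessTerm p a b x y (k + m) k := by
  have h1 : bessSum p a b x y m =
      ∑ j ∈ Finset.range p, bessTerm p a b x y j ((j : ZMod p) - m).val := by
    refine Finset.sum_bij (fun j _ => j.val) (fun j _ => Finset.mem_range.2 j.val_lt)
      (fun i _ j _ hij => ZMod.val_injective p hij)
      (fun j hj => ⟨j, Finset.mem_univ _, ZMod.val_natCast_of_lt (Finset.mem_range.1 hj)⟩)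
      (fun j _ => ?_)
    rw [ZMod.natCast_zmod_val]
  rw [h1, show Finset.range p = Finset.range (m + (p - m)) by congr 1; omega,
    Finset.sum_range_add]
  congr 1
  · refine Finset.sum_congr rfl fun k hk => ?_
    have hk := Finset.mem_range.1 hk
    have : (k : ZMod p) - m = ((k + (p - m) : ℕ) : ZMod p) := by
      rw [Nat.cast_add, Nat.cast_sub hm.le, ZMod.natCast_self, zero_sub, sub_eq_add_neg]
    rw [this, ZMod.val_natCast_of_lt (by omega)]
  · refine Finset.sum_congr rfl fun k hk => ?_
    have hk := Finset.mem_range.1 hk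
    rw [Nat.cast_add, add_sub_cancel_left, ZMod.val_natCast_of_lt (by omega), add_comm]

theorem smul_mul_pow_eq {x y : B} (hyx : y * x = q p ^ 2 • (x * y)) (k : ℕ) :
    (q p • (x * y)) ^ k = q p ^ (k * k) • (x ^ k * y ^ k) := by
  induction k with
  | zero => simp
  | succ k ih =>
    have h1 := q_comm_pow hyx 1 k
    rw [pow_one, one_mul] at h1
    rw [pow_succ, ih, smul_mul_assoc, mul_smul_comm, smul_smul, mul_assoc (x ^ k),
      ← mul_assoc (y ^ k), h1, smul_mul_assoc, mul_smul_comm, smul_smul, mul_assoc x,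
      ← pow_succ y, ← mul_assoc, ← pow_succ x]
    congr 1
    ring

end TwistedDerivation

section Presentation

variable {p : ℕ}

theorem ηm_mul_ηp (p : ℕ) : ηm p * ηp p = q p ^ 2 • (ηp p * ηm p) := by
  have := RingQuot.mkAlgHom_rel ℂ (ERel.commEta (p := p))
  simpa only [map_mul, map_smul] using! this

theorem ηp_mul_dl (p : ℕ) : ηp p * dl p = q p ^ 2 • (dl p * ηp p) := by
  have := RingQuot.mkAlgHom_rel ℂ (ERel.commEpD (p := p))
  simpa only [map_mul, map_smul] using! this

theorem ηm_mul_dl (p : ℕ) : ηm p * dl p = q p ^ 2 • (dl p * ηm p) := by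
  have := RingQuot.mkAlgHom_rel ℂ (ERel.commEmD (p := p))
  simpa only [map_mul, map_smul] using! this

theorem dl_pow (p : ℕ) : dl p ^ p = 1 := by
  have := RingQuot.mkAlgHom_rel ℂ (ERel.deltaPow (p := p))
  simpa only [map_pow, map_one] using! this

theorem ηp_pow (p : ℕ) : ηp p ^ p = 0 := by
  have := RingQuot.mkAlgHom_rel ℂ (ERel.epPow (p := p))
  simpa only [map_pow, map_zero] using! this

theorem ηm_pow (p : ℕ) : ηm p ^ p = 0 := by
  have := RingQuot.mkAlgHom_rel ℂ (ERel.emPow (p := p))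
  simpa only [map_pow, map_zero] using! this

/-- The universal property of `A p`. -/
theorem exists_algHom_of_relations {S : Type*} [Ring S] [Algebra ℂ S] (E M D : S)
    (h1 : M * E = q p ^ 2 • (E * M)) (h2 : E * D = q p ^ 2 • (D * E))
    (h3 : M * D = q p ^ 2 • (D * M)) (h4 : D ^ p = 1) (h5 : E ^ p = 0) (h6 : M ^ p = 0) :
    ∃ φ : A p →ₐ[ℂ] S, φ (ηp p) = E ∧ φ (ηm p) = M ∧ φ (dl p) = D := by
  let f : FreeAlgebra ℂ Gen →ₐ[ℂ] S :=
    FreeAlgebra.lift ℂ (fun t => match t with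
      | Gen.ep => E
      | Gen.em => M
      | Gen.d => D)
  have hE : f (FreeAlgebra.ι ℂ Gen.ep) = E := FreeAlgebra.lift_ι_apply _ _
  have hM : f (FreeAlgebra.ι ℂ Gen.em) = M := FreeAlgebra.lift_ι_apply _ _
  have hD : f (FreeAlgebra.ι ℂ Gen.d) = D := FreeAlgebra.lift_ι_apply _ _
  have hf : ∀ ⦃x y⦄, ERel p x y → f x = f y := by
    intro x y h
    induction h <;> simp only [map_mul, map_smul, map_pow, map_one, map_zero, hE, hM, hD] <;>
      assumption
  refine ⟨RingQuot.liftAlgHom ℂ ⟨f, hf⟩, ?_, ?_, ?_⟩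
  · exact (RingQuot.liftAlgHom_mkAlgHom_apply ℂ f hf _).trans hE
  · exact (RingQuot.liftAlgHom_mkAlgHom_apply ℂ f hf _).trans hM
  · exact (RingQuot.liftAlgHom_mkAlgHom_apply ℂ f hf _).trans hD

theorem A_induction {P : A p → Prop} (algebraMap : ∀ r : ℂ, P (algebraMap ℂ (A p) r))
    (add : ∀ a b, P a → P b → P (a + b)) (mul : ∀ a b, P a → P b → P (a * b))
    (h1 : P (ηp p)) (h2 : P (ηm p)) (h3 : P (dl p)) (a : A p) : P a := by
  obtain ⟨a, rfl⟩ := RingQuot.mkAlgHom_surjective ℂ (ERel p) a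
  induction a using FreeAlgebra.induction with
  | grade0 r =>
    rw [AlgHom.commutes]
    exact algebraMap r
  | grade1 x => cases x <;> assumption
  | mul a b ha hb =>
    rw [map_mul]
    exact mul _ _ ha hb
  | add a b ha hb =>
    rw [map_add]
    exact add _ _ ha hb

theorem AC_induction {P : AC p → Prop} (add : ∀ a b, P a → P b → P (a + b))
    (mul : ∀ a b, P a → P b → P (a * b)) (h1 : P (ηp p ⊗ₜ[ℂ] (1 : ↥Cinf)))
    (h2 : P (ηm p ⊗ₜ[ℂ] (1 : ↥Cinf))) (h3 : P (dl p ⊗ₜ[ℂ] (1 : ↥Cinf)))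
    (hf : ∀ f : ↥Cinf, P ((1 : A p) ⊗ₜ[ℂ] f)) (X : AC p) : P X := by
  induction X using TensorProduct.induction_on with
  | zero => simpa only [TensorProduct.tmul_zero] using hf 0
  | tmul a f =>
    have ha : P (a ⊗ₜ[ℂ] (1 : ↥Cinf)) := by
      induction a using A_induction with
      | algebraMap r =>
        rw [Algebra.algebraMap_eq_smul_one, TensorProduct.smul_tmul]
        exact hf _
      | add a b ha hb =>
        rw [TensorProduct.add_tmul]
        exact add _ _ ha hb
      | mul a b ha hb =>
        rw [← mul_one (1 : ↥Cinf), ← Algebra.TensorProduct.tmul_mul_tmul]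
        exact mul _ _ ha hb
      | h1 => exact h1
      | h2 => exact h2
      | h3 => exact h3
    rw [← mul_one a, ← one_mul f, ← Algebra.TensorProduct.tmul_mul_tmul]
    exact mul _ _ ha (hf f)
  | add a b ha hb => exact add _ _ ha hb

end Presentation

section Existence

variable {p : ℕ}

theorem matrix_two_congr {B : Type*} {a a' b b' c c' d d' : B} (ha : a = a') (hb : b = b')
    (hc : c = c') (hd : d = d') : !![a, b; c, d] = !![a', b'; c', d'] := by
  rw [ha, hb, hc, hd]

theorem matrix_pow {B : Type*} [Ring B] [Algebra ℂ B] (x : B) {r c : ℂ}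
    (hn : ∀ k, qnum p (k + 1) = r * qnum p k + r⁻¹ ^ k) (k : ℕ) :
    !![r⁻¹ • x, c • 1; 0, r • x] ^ (k + 1) =
      !![r⁻¹ ^ (k + 1) • x ^ (k + 1), (c * qnum p (k + 1)) • x ^ k;
        0, r ^ (k + 1) • x ^ (k + 1)] := by
  induction k with
  | zero => simp [hn, qnum_zero]
  | succ k ih =>
    rw [pow_succ, ih, Matrix.mul_fin_two]
    simp only [smul_mul_assoc, mul_smul_comm, smul_smul, ← pow_succ, mul_one, mul_zero, zero_mul,
      add_zero, ← add_smul]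
    refine matrix_two_congr (by rw [← pow_succ']) ?_ (smul_zero _) (by rw [smul_zero, zero_add, ← pow_succ'])
    congr 1
    rw [hn (k + 1)]
    ring

theorem matrix_pow_eq_zero {B : Type*} [Ring B] [Algebra ℂ B] {x : B} {r : ℂ} (c : ℂ)
    (hp : p ≠ 0) (hn : ∀ k, qnum p (k + 1) = r * qnum p k + r⁻¹ ^ k) (hx : x ^ p = 0) :
    !![r⁻¹ • x, c • 1; 0, r • x] ^ p = 0 := by
  have h := matrix_pow x (c := c) hn (p - 1)
  rw [Nat.sub_add_cancel (Nat.one_le_iff_ne_zero.2 hp), hx, qnum_self hp] at h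
  rw [h]
  ext i j
  fin_cases i <;> fin_cases j <;> simp

theorem exists_matrix_algHom {B : Type*} [Ring B] [Algebra ℂ B] (hp : Odd p) (hp3 : 3 ≤ p)
    {x y d : B} (h1 : y * x = q p ^ 2 • (x * y)) (h2 : x * d = q p ^ 2 • (d * x))
    (h3 : y * d = q p ^ 2 • (d * y)) (h4 : d ^ p = 1) (h5 : x ^ p = 0) (h6 : y ^ p = 0)
    (u v : ℂ) :
    ∃ φ : A p →ₐ[ℂ] Matrix (Fin 2) (Fin 2) B,
      φ (ηp p) = !![(q p)⁻¹ • x, u • 1; 0, q p • x] ∧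
      φ (ηm p) = !![q p • y, v • 1; 0, (q p)⁻¹ • y] ∧
      φ (dl p) = !![(q p)⁻¹ • d, 0; 0, q p • d] := by
  have h0 := q_ne_zero p
  have hpow := (q_isPrimitiveRoot hp.pos.ne').pow_eq_one
  have hdiag : ∀ n : ℕ, !![(q p)⁻¹ • d, 0; 0, q p • d] ^ n =
      !![((q p)⁻¹ • d) ^ n, 0; 0, (q p • d) ^ n] := by
    intro n
    induction n with
    | zero => simp [Matrix.one_fin_two]
    | succ n ih => simp [pow_succ, ih]
  apply exists_algHom_of_relations
  · simp only [Matrix.mul_fin_two, Matrix.smul_of, Matrix.smul_cons, Matrix.smul_empty,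
      smul_mul_assoc, mul_smul_comm, mul_one, one_mul, mul_zero, zero_mul, add_zero, h1]
    refine matrix_two_congr ?_ ?_ ?_ ?_ <;> match_scalars <;> field_simp
  · simp only [Matrix.mul_fin_two, Matrix.smul_of, Matrix.smul_cons, Matrix.smul_empty,
      smul_mul_assoc, mul_smul_comm, mul_one, one_mul, mul_zero, zero_mul, add_zero, zero_add, h2]
    refine matrix_two_congr ?_ ?_ ?_ ?_ <;> match_scalars <;> field_simp
  · simp only [Matrix.mul_fin_two, Matrix.smul_of, Matrix.smul_cons, Matrix.smul_empty,
      smul_mul_assoc, mul_smul_comm, mul_one, one_mul, mul_zero, zero_mul, add_zero, zero_add, h3]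
    refine matrix_two_congr ?_ ?_ ?_ ?_ <;> match_scalars <;> field_simp
  · rw [hdiag, smul_pow, smul_pow, h4, inv_pow, hpow, inv_one, one_smul, Matrix.one_fin_two]
  · exact matrix_pow_eq_zero u hp.pos.ne' (qnum_succ hp hp3) h5
  · have := matrix_pow_eq_zero v hp.pos.ne' (qnum_succ' hp hp3) h6
    rwa [inv_inv] at this

/-- Existence of a twisted derivation of `AC p` with prescribed values on generators. -/
theorem exists_isTwisted (hp : Odd p) (hp3 : 3 ≤ p) (RK : AC p ≃ₐ[ℂ] AC p)
    (hK1 : RK (ηp p ⊗ₜ[ℂ] (1 : ↥Cinf)) = q p • (ηp p ⊗ₜ[ℂ] (1 : ↥Cinf)))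
    (hK2 : RK (ηm p ⊗ₜ[ℂ] (1 : ↥Cinf)) = (q p)⁻¹ • (ηm p ⊗ₜ[ℂ] (1 : ↥Cinf)))
    (hK3 : RK (dl p ⊗ₜ[ℂ] (1 : ↥Cinf)) = q p • (dl p ⊗ₜ[ℂ] (1 : ↥Cinf)))
    (hK4 : ∀ f : ↥Cinf, RK ((1 : A p) ⊗ₜ[ℂ] f) = (1 : A p) ⊗ₜ[ℂ] f)
    (u v : ℂ) (w : A p) (D : Derivation ℂ ↥Cinf ↥Cinf)
    (hw1 : ηp p * w = q p ^ 2 • (w * ηp p)) (hw2 : w * ηm p = q p ^ 2 • (ηm p * w))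
    (hw3 : dl p * w = q p ^ 2 • (w * dl p)) :
    ∃ R : AC p →ₗ[ℂ] AC p, R (ηp p ⊗ₜ[ℂ] (1 : ↥Cinf)) = u • (1 : AC p) ∧
      R (ηm p ⊗ₜ[ℂ] (1 : ↥Cinf)) = v • (1 : AC p) ∧
      R (dl p ⊗ₜ[ℂ] (1 : ↥Cinf)) = 0 ∧
      (∀ f : ↥Cinf, R ((1 : A p) ⊗ₜ[ℂ] f) = w ⊗ₜ[ℂ] D f) ∧ IsTwisted (B := AC p) RK R := by
  have h0 := q_ne_zero p
  let inc : A p →ₐ[ℂ] AC p := Algebra.TensorProduct.includeLeft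
  have hinc : ∀ a, inc a = a ⊗ₜ[ℂ] (1 : ↥Cinf) := fun _ => rfl
  obtain ⟨φ, hφ1, hφ2, hφ3⟩ := exists_matrix_algHom (B := AC p) hp hp3
    (x := inc (ηp p)) (y := inc (ηm p)) (d := inc (dl p))
    (by rw [← map_mul, ηm_mul_ηp, map_smul, map_mul])
    (by rw [← map_mul, ηp_mul_dl, map_smul, map_mul])
    (by rw [← map_mul, ηm_mul_dl, map_smul, map_mul])
    (by rw [← map_pow, dl_pow, map_one])
    (by rw [← map_pow, ηp_pow, map_zero])
    (by rw [← map_pow, ηm_pow, map_zero]) u v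
  simp only [hinc] at hφ1 hφ2 hφ3
  let ψ : ↥Cinf →ₐ[ℂ] Matrix (Fin 2) (Fin 2) (AC p) := AlgHom.ofLinearMap
    { toFun := fun f => !![1 ⊗ₜ f, w ⊗ₜ D f; 0, 1 ⊗ₜ f]
      map_add' := fun f g => by
        simp only [map_add, TensorProduct.tmul_add, Matrix.of_add_of, Matrix.cons_add_cons,
          Matrix.empty_add_empty, add_zero]
      map_smul' := fun c f => by
        simp only [Derivation.map_smul, TensorProduct.tmul_smul, Matrix.smul_of, Matrix.smul_cons,
          Matrix.smul_empty, smul_zero, RingHom.id_apply] }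
    (by
      simp only [LinearMap.coe_mk, AddHom.coe_mk, Derivation.map_one_eq_zero,
        TensorProduct.tmul_zero, Matrix.one_fin_two, Algebra.TensorProduct.one_def])
    (fun f g => by
      simp only [LinearMap.coe_mk, AddHom.coe_mk, Matrix.mul_fin_two, Derivation.leibniz,
        smul_eq_mul, Algebra.TensorProduct.tmul_mul_tmul, one_mul, mul_one, mul_zero, zero_mul,
        add_zero, zero_add, TensorProduct.tmul_add, mul_comm g (D f)])
  have hψ : ∀ f, ψ f = !![1 ⊗ₜ f, w ⊗ₜ D f; 0, 1 ⊗ₜ f] := fun _ => rfl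
  have hcomm : ∀ a f, Commute (φ a) (ψ f) := by
    intro a f
    induction a using A_induction with
    | algebraMap r =>
      rw [AlgHom.commutes]
      exact Algebra.commutes _ _
    | add a b ha hb =>
      rw [map_add]
      exact ha.add_left hb
    | mul a b ha hb =>
      rw [map_mul]
      exact ha.mul_left hb
    | h1 =>
      rw [hφ1, hψ, Commute, SemiconjBy]
      simp only [Matrix.mul_fin_two, smul_mul_assoc, mul_smul_comm,
        Algebra.TensorProduct.tmul_mul_tmul, one_mul, mul_one, mul_zero, zero_mul, add_zero,
        zero_add, hw1, ← TensorProduct.smul_tmul']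
      refine matrix_two_congr rfl ?_ rfl rfl
      match_scalars <;> field_simp
    | h2 =>
      rw [hφ2, hψ, Commute, SemiconjBy]
      simp only [Matrix.mul_fin_two, smul_mul_assoc, mul_smul_comm,
        Algebra.TensorProduct.tmul_mul_tmul, one_mul, mul_one, mul_zero, zero_mul, add_zero,
        zero_add, hw2, ← TensorProduct.smul_tmul']
      refine matrix_two_congr rfl ?_ rfl rfl
      match_scalars <;> field_simp
    | h3 =>
      rw [hφ3, hψ, Commute, SemiconjBy]
      simp only [Matrix.mul_fin_two, smul_mul_assoc, mul_smul_comm,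
        Algebra.TensorProduct.tmul_mul_tmul, one_mul, mul_one, mul_zero, zero_mul, add_zero,
        zero_add, hw3, ← TensorProduct.smul_tmul']
      refine matrix_two_congr rfl ?_ rfl rfl
      match_scalars
      field_simp
  let Φ : AC p →ₐ[ℂ] Matrix (Fin 2) (Fin 2) (AC p) := Algebra.TensorProduct.lift φ ψ hcomm
  have hΦ1 : ∀ a, Φ (a ⊗ₜ[ℂ] (1 : ↥Cinf)) = φ a := fun a => by
    rw [Algebra.TensorProduct.lift_tmul, map_one, mul_one]
  have hΦ2 : ∀ f, Φ ((1 : A p) ⊗ₜ[ℂ] f) = ψ f := fun f => by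
    rw [Algebra.TensorProduct.lift_tmul, map_one, one_mul]
  have hΦ : ∀ X, Φ X 0 0 = RK.symm X ∧ Φ X 1 0 = 0 ∧ Φ X 1 1 = RK X := by
    intro X
    induction X using AC_induction with
    | add a b ha hb => simp only [map_add, Matrix.add_apply, ha, hb, add_zero, and_self]
    | mul a b ha hb =>
      simp only [map_mul, Matrix.mul_apply, Fin.sum_univ_two, ha, hb, mul_zero, zero_mul,
        add_zero, zero_add, and_self]
    | h1 => simp [hΦ1, hφ1, hK1, symm_smul_eq (B := AC p) h0 hK1]
    | h2 => simp [hΦ1, hφ2, hK2, symm_smul_eq (B := AC p) (inv_ne_zero h0) hK2]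
    | h3 => simp [hΦ1, hφ3, hK3, symm_smul_eq (B := AC p) h0 hK3]
    | hf f =>
      have : RK.symm ((1 : A p) ⊗ₜ[ℂ] f) = 1 ⊗ₜ f := by rw [AlgEquiv.symm_apply_eq, hK4]
      simp [hΦ2, hψ, hK4, this]
  refine ⟨Matrix.entryLinearMap ℂ (AC p) 0 1 ∘ₗ Φ.toLinearMap, ?_, ?_, ?_, ?_, ?_⟩
  · simp [hΦ1, hφ1]
  · simp [hΦ1, hφ2]
  · simp [hΦ1, hφ3]
  · intro f
    simp [hΦ2, hψ]
  · intro X Y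
    simp only [LinearMap.comp_apply, AlgHom.toLinearMap_apply, Matrix.entryLinearMap_apply,
      map_mul, Matrix.mul_apply, Fin.sum_univ_two, (hΦ X).1, (hΦ Y).2.2]
    exact add_comm _ _

theorem IsTwisted.ext {RK : AC p ≃ₐ[ℂ] AC p} {R S : AC p →ₗ[ℂ] AC p} (hR : IsTwisted (B := AC p) RK R)
    (hS : IsTwisted (B := AC p) RK S)
    (h1 : R (ηp p ⊗ₜ[ℂ] (1 : ↥Cinf)) = S (ηp p ⊗ₜ[ℂ] (1 : ↥Cinf)))
    (h2 : R (ηm p ⊗ₜ[ℂ] (1 : ↥Cinf)) = S (ηm p ⊗ₜ[ℂ] (1 : ↥Cinf)))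
    (h3 : R (dl p ⊗ₜ[ℂ] (1 : ↥Cinf)) = S (dl p ⊗ₜ[ℂ] (1 : ↥Cinf)))
    (hf : ∀ f : ↥Cinf, R ((1 : A p) ⊗ₜ[ℂ] f) = S ((1 : A p) ⊗ₜ[ℂ] f)) : R = S := by
  refine LinearMap.ext fun X => ?_
  induction X using AC_induction with
  | add a b ha hb => rw [map_add, map_add, ha, hb]
  | mul a b ha hb => rw [hR, hS, ha, hb]
  | h1 => exact h1
  | h2 => exact h2
  | h3 => exact h3
  | hf f => exact hf f

/-- The directional derivative along `v`, as a derivation of `Cinf`. -/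
def dirDeriv (v : ℝ × ℝ) : Derivation ℂ ↥Cinf ↥Cinf :=
  Derivation.mk'
    { toFun := fun f => ⟨fun z => fderiv ℝ (f : (ℝ × ℝ) → ℂ) z v, by
        have hf : ContDiff ℝ (⊤ : ℕ∞) (f : (ℝ × ℝ) → ℂ) := f.2
        exact (hf.fderiv_right (m := (⊤ : ℕ∞)) (by simp)).clm_apply contDiff_const⟩
      map_add' := fun f g => by
        have hf : ContDiff ℝ (⊤ : ℕ∞) (f : (ℝ × ℝ) → ℂ) := f.2
        have hg : ContDiff ℝ (⊤ : ℕ∞) (g : (ℝ × ℝ) → ℂ) := g.2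
        ext z
        have := fderiv_add (hf.differentiable (by simp) z) (hg.differentiable (by simp) z)
        exact congrArg (fun L : (ℝ × ℝ) →L[ℝ] ℂ => L v) this
      map_smul' := fun c f => by
        have hf : ContDiff ℝ (⊤ : ℕ∞) (f : (ℝ × ℝ) → ℂ) := f.2
        ext z
        have := fderiv_const_smul (hf.differentiable (by simp) z) c
        exact congrArg (fun L : (ℝ × ℝ) →L[ℝ] ℂ => L v) this }
    (fun f g => by
      have hf : ContDiff ℝ (⊤ : ℕ∞) (f : (ℝ × ℝ) → ℂ) := f.2
      have hg : ContDiff ℝ (⊤ : ℕ∞) (g : (ℝ × ℝ) → ℂ) := g.2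
      ext z
      have := fderiv_mul (hf.differentiable (by simp) z) (hg.differentiable (by simp) z)
      exact congrArg (fun L : (ℝ × ℝ) →L[ℝ] ℂ => L v) this)

theorem hasFDerivAt_expAB (a b : ℂ) (z : ℝ × ℝ) :
    HasFDerivAt (expAB a b : ℝ × ℝ → ℂ)
      ((expAB a b : ℝ × ℝ → ℂ) z • (Complex.I •
        (a • Complex.ofRealCLM.comp (ContinuousLinearMap.fst ℝ ℝ ℝ) +
          b • Complex.ofRealCLM.comp (ContinuousLinearMap.snd ℝ ℝ ℝ)))) z := by
  have h1 : HasFDerivAt (fun z : ℝ × ℝ => (z.1 : ℂ))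
      (Complex.ofRealCLM.comp (ContinuousLinearMap.fst ℝ ℝ ℝ)) z :=
    (Complex.ofRealCLM.comp (ContinuousLinearMap.fst ℝ ℝ ℝ)).hasFDerivAt
  have h2 : HasFDerivAt (fun z : ℝ × ℝ => (z.2 : ℂ))
      (Complex.ofRealCLM.comp (ContinuousLinearMap.snd ℝ ℝ ℝ)) z :=
    (Complex.ofRealCLM.comp (ContinuousLinearMap.snd ℝ ℝ ℝ)).hasFDerivAt
  exact (((h1.const_mul a).add (h2.const_mul b)).const_mul Complex.I).cexp

theorem dPlus_expAB (a b : ℂ) : dPlus (expAB a b) = (Complex.I * a) • expAB a b := by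
  ext z
  change fderiv ℝ (expAB a b : ℝ × ℝ → ℂ) z (1, 0) = (Complex.I * a) * (expAB a b : ℝ × ℝ → ℂ) z
  rw [(hasFDerivAt_expAB a b z).fderiv]
  simp [mul_comm]

theorem dMinus_expAB (a b : ℂ) : dMinus (expAB a b) = (Complex.I * b) • expAB a b := by
  ext z
  change fderiv ℝ (expAB a b : ℝ × ℝ → ℂ) z (0, 1) = (Complex.I * b) * (expAB a b : ℝ × ℝ → ℂ) z
  rw [(hasFDerivAt_expAB a b z).fderiv]
  simp [mul_comm]

theorem dm0_eq_bessSum [NeZero p] (lp lm : ℂ) {m : ℕ} (hm : m < p) :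
    dm0 p lp lm m = bessSum p (-Complex.I * (qh p)⁻¹ * lp) (-Complex.I * qh p * lm)
      (ηp p) (ηm p) m := by
  have h0 := qh_ne_zero p
  have hxi : ∀ k, xi p ^ k = q p ^ (k * k) • (ηp p ^ k * ηm p ^ k) :=
    smul_mul_pow_eq (ηm_mul_ηp p)
  have hl : ∀ k : ℕ, (-1 : ℂ) ^ k * (lp * lm) ^ k =
      (-Complex.I * (qh p)⁻¹ * lp) ^ k * (-Complex.I * qh p * lm) ^ k := by
    intro k
    rw [← mul_pow, ← mul_pow]
    congr 1
    field_simp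
    rw [Complex.I_sq]
    ring
  rw [bessSum_eq _ _ _ _ hm, dm0]
  generalize (-Complex.I * (qh p)⁻¹ * lp) = a at hl ⊢
  generalize (-Complex.I * qh p * lm) = b at hl ⊢
  congr 1
  · rw [Jq, Finset.sum_mul, Nat.sub_sub_self hm.le]
    refine Finset.sum_congr rfl fun k _ => ?_
    rw [hxi, bessTerm, smul_pow]
    simp only [smul_mul_assoc, mul_smul_comm, smul_smul, mul_assoc (ηp p ^ k), ← pow_add]
    congr 1
    have := hl k
    rw [mul_add k k, pow_add, pow_add b, ← mul_assoc, mul_comm (p - m) k]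
    linear_combination (b ^ (p - m) * q p ^ (k * k) * q p ^ (k * (p - m)) /
      (qfact p k * qfact p (k + (p - m)))) * this
  · rw [Jq, Finset.mul_sum]
    refine Finset.sum_congr rfl fun k _ => ?_
    rw [hxi, bessTerm, smul_pow]
    simp only [smul_mul_assoc, mul_smul_comm, smul_smul, ← mul_assoc (ηp p ^ m), ← pow_add]
    rw [add_comm m k]
    congr 1
    have := hl k
    rw [add_mul, pow_add, pow_add a]
    linear_combination (a ^ m * q p ^ (k * k) * q p ^ (m * k) /
      (qfact p k * qfact p (k + m))) * this

theorem bessSum_tmul [NeZero p] (a b : ℂ) (x y : A p) (m : ZMod p) (g : ↥Cinf) :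
    bessSum p a b x y m ⊗ₜ[ℂ] g =
      bessSum p a b (x ⊗ₜ[ℂ] (1 : ↥Cinf)) (y ⊗ₜ[ℂ] (1 : ↥Cinf)) m * ((1 : A p) ⊗ₜ[ℂ] g) := by
  simp only [bessSum, bessTerm, TensorProduct.sum_tmul, Finset.sum_mul,
    Algebra.TensorProduct.tmul_pow, Algebra.TensorProduct.tmul_mul_tmul, one_pow, mul_one,
    one_mul, TensorProduct.smul_tmul']

end Existence

section CommutationScalars

variable {p : ℕ} {B : Type*} [Ring B] [Algebra ℂ B] {x y : B}

theorem q_sq_mul_pow_pred (hp : p ≠ 0) : q p ^ 2 * (q p ^ 2) ^ (p - 1) = 1 := by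
  rw [← pow_succ', Nat.sub_add_cancel (Nat.one_le_iff_ne_zero.2 hp), ← pow_mul, mul_comm, pow_mul,
    (q_isPrimitiveRoot hp).pow_eq_one, one_pow]

theorem pow_pred_mul (hp : p ≠ 0) (h : y * x = q p ^ 2 • (x * y)) :
    x ^ (p - 1) * y = q p ^ 2 • (y * x ^ (p - 1)) := by
  have := q_comm_pow h (p - 1) 1
  rw [pow_one, mul_one] at this
  rw [this, smul_smul, q_sq_mul_pow_pred hp, one_smul]

theorem mul_pow_pred (hp : p ≠ 0) (h : y * x = q p ^ 2 • (x * y)) :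
    x * y ^ (p - 1) = q p ^ 2 • (y ^ (p - 1) * x) := by
  have := q_comm_pow h 1 (p - 1)
  rw [pow_one, one_mul] at this
  rw [this, smul_smul, q_sq_mul_pow_pred hp, one_smul]

theorem scalar_identity (hp : Odd p) {s : ℂ} (hs : s ^ p = -1) (l F : ℂ) :
    Complex.I * s * ((-1 : ℂ) ^ ((p + 1) / 2) / F) * (Complex.I * -(l ^ p)) =
      l * (-Complex.I * s⁻¹ * l) ^ (p - 1) / F := by
  have hinv : s⁻¹ ^ (p - 1) = -s := by
    rw [inv_pow]
    apply inv_eq_of_mul_eq_one_right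
    rw [mul_neg, ← pow_succ, Nat.sub_add_cancel hp.pos, hs, neg_neg]
  have hl : l ^ p = l * l ^ (p - 1) := by rw [← pow_succ', Nat.sub_add_cancel hp.pos]
  rw [mul_pow, mul_pow, neg_I_pow_pred hp, hinv, hl]
  linear_combination (-(s * (-1 : ℂ) ^ ((p + 1) / 2) / F * (l * l ^ (p - 1)))) * Complex.I_mul_I

end CommutationScalars

/-- Existence and uniqueness of the right regular action `R₊, R₋` of the generators
`p₊, p₋` of `U_q(e(1,1))` on `A_C`, and the angular-momentum recurrences satisfied by
the matrix elements `D_m = d_{m0}(λ)⊗g_λ`. -/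
theorem statement12 (p : ℕ) (hp : Odd p) (hp3 : 3 ≤ p)
    (RK : AC p ≃ₐ[ℂ] AC p)
    (hK1 : RK (ηp p ⊗ₜ[ℂ] (1 : ↥Cinf)) = q p • (ηp p ⊗ₜ[ℂ] (1 : ↥Cinf)))
    (hK2 : RK (ηm p ⊗ₜ[ℂ] (1 : ↥Cinf)) = (q p)⁻¹ • (ηm p ⊗ₜ[ℂ] (1 : ↥Cinf)))
    (hK3 : RK (dl p ⊗ₜ[ℂ] (1 : ↥Cinf)) = q p • (dl p ⊗ₜ[ℂ] (1 : ↥Cinf)))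
    (hK4 : ∀ f : ↥Cinf, RK ((1 : A p) ⊗ₜ[ℂ] f) = (1 : A p) ⊗ₜ[ℂ] f) :
    (∃! Rp : AC p →ₗ[ℂ] AC p,
      Rp (ηp p ⊗ₜ[ℂ] (1 : ↥Cinf)) = (Complex.I * qh p) • (1 : AC p) ∧
      Rp (ηm p ⊗ₜ[ℂ] (1 : ↥Cinf)) = 0 ∧
      Rp (dl p ⊗ₜ[ℂ] (1 : ↥Cinf)) = 0 ∧
      (∀ f : ↥Cinf, Rp ((1 : A p) ⊗ₜ[ℂ] f) =
        (Complex.I * qh p * ((-1 : ℂ) ^ ((p + 1) / 2) / qfact p (p - 1))) •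
          ((ηp p ^ (p - 1)) ⊗ₜ[ℂ] dPlus f)) ∧
      (∀ X Y : AC p, Rp (X * Y) = Rp X * RK Y + RK.symm X * Rp Y)) ∧
    (∃! Rm : AC p →ₗ[ℂ] AC p,
      Rm (ηm p ⊗ₜ[ℂ] (1 : ↥Cinf)) = (Complex.I * (qh p)⁻¹) • (1 : AC p) ∧
      Rm (ηp p ⊗ₜ[ℂ] (1 : ↥Cinf)) = 0 ∧
      Rm (dl p ⊗ₜ[ℂ] (1 : ↥Cinf)) = 0 ∧
      (∀ f : ↥Cinf, Rm ((1 : A p) ⊗ₜ[ℂ] f) =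
        (Complex.I * (qh p)⁻¹ * ((-1 : ℂ) ^ ((p + 1) / 2) / qfact p (p - 1))) •
          ((ηm p ^ (p - 1)) ⊗ₜ[ℂ] dMinus f)) ∧
      (∀ X Y : AC p, Rm (X * Y) = Rm X * RK Y + RK.symm X * Rm Y)) ∧
    (∀ Rp Rm : AC p →ₗ[ℂ] AC p,
      (Rp (ηp p ⊗ₜ[ℂ] (1 : ↥Cinf)) = (Complex.I * qh p) • (1 : AC p) ∧
       Rp (ηm p ⊗ₜ[ℂ] (1 : ↥Cinf)) = 0 ∧
       Rp (dl p ⊗ₜ[ℂ] (1 : ↥Cinf)) = 0 ∧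
       (∀ f : ↥Cinf, Rp ((1 : A p) ⊗ₜ[ℂ] f) =
         (Complex.I * qh p * ((-1 : ℂ) ^ ((p + 1) / 2) / qfact p (p - 1))) •
           ((ηp p ^ (p - 1)) ⊗ₜ[ℂ] dPlus f)) ∧
       (∀ X Y : AC p, Rp (X * Y) = Rp X * RK Y + RK.symm X * Rp Y)) →
      (Rm (ηm p ⊗ₜ[ℂ] (1 : ↥Cinf)) = (Complex.I * (qh p)⁻¹) • (1 : AC p) ∧
       Rm (ηp p ⊗ₜ[ℂ] (1 : ↥Cinf)) = 0 ∧
       Rm (dl p ⊗ₜ[ℂ] (1 : ↥Cinf)) = 0 ∧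
       (∀ f : ↥Cinf, Rm ((1 : A p) ⊗ₜ[ℂ] f) =
         (Complex.I * (qh p)⁻¹ * ((-1 : ℂ) ^ ((p + 1) / 2) / qfact p (p - 1))) •
           ((ηm p ^ (p - 1)) ⊗ₜ[ℂ] dMinus f)) ∧
       (∀ X Y : AC p, Rm (X * Y) = Rm X * RK Y + RK.symm X * Rm Y)) →
      ∀ lp lm : ℂ,
        (∀ m : ℕ, 1 ≤ m → m ≤ p - 1 →
          Rp (dm0 p lp lm m ⊗ₜ[ℂ] expAB (-(lp ^ p)) (-(lm ^ p))) =
            lp • (dm0 p lp lm (m - 1) ⊗ₜ[ℂ] expAB (-(lp ^ p)) (-(lm ^ p)))) ∧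
        (∀ m : ℕ, m ≤ p - 2 →
          Rm (dm0 p lp lm m ⊗ₜ[ℂ] expAB (-(lp ^ p)) (-(lm ^ p))) =
            lm • (dm0 p lp lm (m + 1) ⊗ₜ[ℂ] expAB (-(lp ^ p)) (-(lm ^ p)))) ∧
        Rp (dm0 p lp lm 0 ⊗ₜ[ℂ] expAB (-(lp ^ p)) (-(lm ^ p))) =
          lp • (dm0 p lp lm (p - 1) ⊗ₜ[ℂ] expAB (-(lp ^ p)) (-(lm ^ p))) ∧
        Rm (dm0 p lp lm (p - 1) ⊗ₜ[ℂ] expAB (-(lp ^ p)) (-(lm ^ p))) =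
          lm • (dm0 p lp lm 0 ⊗ₜ[ℂ] expAB (-(lp ^ p)) (-(lm ^ p)))) := by
  have : NeZero p := ⟨hp.pos.ne'⟩
  have hadd : ((p - 1 : ℕ) : ZMod p) = 0 - 1 := by
    rw [Nat.cast_sub (by omega), ZMod.natCast_self, Nat.cast_one]
  refine ⟨?_, ?_, ?_⟩
  · obtain ⟨R, h1, h2, h3, h4, h5⟩ := exists_isTwisted hp hp3 RK hK1 hK2 hK3 hK4
      (Complex.I * qh p) 0
      ((Complex.I * qh p * ((-1 : ℂ) ^ ((p + 1) / 2) / qfact p (p - 1))) • ηp p ^ (p - 1))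
      (dirDeriv (1, 0))
      (by
        rw [mul_smul_comm, smul_mul_assoc, ← pow_succ, ← pow_succ',
          Nat.sub_add_cancel hp.pos, ηp_pow, smul_zero, smul_zero])
      (by rw [smul_mul_assoc, mul_smul_comm, pow_pred_mul hp.pos.ne' (ηm_mul_ηp p), smul_comm])
      (by rw [smul_mul_assoc, mul_smul_comm, mul_pow_pred hp.pos.ne' (ηp_mul_dl p), smul_comm])
    rw [zero_smul] at h2
    have h4' : ∀ f : ↥Cinf, R ((1 : A p) ⊗ₜ[ℂ] f) =
        (Complex.I * qh p * ((-1 : ℂ) ^ ((p + 1) / 2) / qfact p (p - 1))) •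
          ((ηp p ^ (p - 1)) ⊗ₜ[ℂ] dPlus f) := h4
    refine ⟨R, ⟨h1, h2, h3, h4', h5⟩, ?_⟩
    rintro S ⟨g1, g2, g3, g4, g5⟩
    exact IsTwisted.ext g5 h5 (g1.trans h1.symm) (g2.trans h2.symm) (g3.trans h3.symm)
      fun f => (g4 f).trans (h4' f).symm
  · obtain ⟨R, h1, h2, h3, h4, h5⟩ := exists_isTwisted hp hp3 RK hK1 hK2 hK3 hK4
      0 (Complex.I * (qh p)⁻¹)
      ((Complex.I * (qh p)⁻¹ * ((-1 : ℂ) ^ ((p + 1) / 2) / qfact p (p - 1))) • ηm p ^ (p - 1))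
      (dirDeriv (0, 1))
      (by rw [smul_mul_assoc, mul_smul_comm, mul_pow_pred hp.pos.ne' (ηm_mul_ηp p), smul_comm])
      (by
        rw [mul_smul_comm, smul_mul_assoc, ← pow_succ, ← pow_succ',
          Nat.sub_add_cancel hp.pos, ηm_pow, smul_zero, smul_zero])
      (by rw [smul_mul_assoc, mul_smul_comm, mul_pow_pred hp.pos.ne' (ηm_mul_dl p), smul_comm])
    rw [zero_smul] at h1
    have h4' : ∀ f : ↥Cinf, R ((1 : A p) ⊗ₜ[ℂ] f) =
        (Complex.I * (qh p)⁻¹ * ((-1 : ℂ) ^ ((p + 1) / 2) / qfact p (p - 1))) •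
          ((ηm p ^ (p - 1)) ⊗ₜ[ℂ] dMinus f) := h4
    refine ⟨R, ⟨h2, h1, h3, h4', h5⟩, ?_⟩
    rintro S ⟨g1, g2, g3, g4, g5⟩
    exact IsTwisted.ext g5 h5 (g2.trans h1.symm) (g1.trans h2.symm) (g3.trans h3.symm)
      fun f => (g4 f).trans (h4' f).symm
  · rintro Rp Rm ⟨hp1, hp2, -, hp4, hp5⟩ ⟨hm1, hm2, -, hm4, hm5⟩ lp lm
    have hRp : IsTwisted (B := AC p) RK Rp := hp5
    have hRm : IsTwisted (B := AC p) RK Rm := hm5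
    have hyx : (ηm p ⊗ₜ[ℂ] (1 : ↥Cinf)) * (ηp p ⊗ₜ[ℂ] (1 : ↥Cinf)) =
        q p ^ 2 • ((ηp p ⊗ₜ[ℂ] (1 : ↥Cinf)) * (ηm p ⊗ₜ[ℂ] (1 : ↥Cinf))) := by
      rw [Algebra.TensorProduct.tmul_mul_tmul, Algebra.TensorProduct.tmul_mul_tmul, ηm_mul_ηp,
        TensorProduct.smul_tmul']
    have hxp : (ηp p ⊗ₜ[ℂ] (1 : ↥Cinf)) ^ p = 0 := by
      rw [Algebra.TensorProduct.tmul_pow, ηp_pow, TensorProduct.zero_tmul]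
    have hyp : (ηm p ⊗ₜ[ℂ] (1 : ↥Cinf)) ^ p = 0 := by
      rw [Algebra.TensorProduct.tmul_pow, ηm_pow, TensorProduct.zero_tmul]
    have hI : Complex.I * Complex.I = -1 := Complex.I_mul_I
    have hh := mul_inv_cancel₀ (qh_ne_zero p)
    have plus : ∀ m : ZMod p,
        Rp (bessSum p (-Complex.I * (qh p)⁻¹ * lp) (-Complex.I * qh p * lm) (ηp p) (ηm p) m ⊗ₜ[ℂ]
          expAB (-(lp ^ p)) (-(lm ^ p))) =
        lp • (bessSum p (-Complex.I * (qh p)⁻¹ * lp) (-Complex.I * qh p * lm) (ηp p) (ηm p)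
          (m - 1) ⊗ₜ[ℂ] expAB (-(lp ^ p)) (-(lm ^ p))) := by
      intro m
      rw [bessSum_tmul, bessSum_tmul]
      refine hRp.map_bessSum_plus hp hp3 hK1 hK2 (hK4 _) hp1 hp2
        ?_ hyx hxp (by linear_combination (-(qh p * (qh p)⁻¹ * lp)) * hI + lp * hh)
        (scalar_identity hp (qh_pow hp.pos.ne') lp _) m
      rw [hp4, dPlus_expAB, TensorProduct.tmul_smul, smul_smul, Algebra.TensorProduct.tmul_pow,
        Algebra.TensorProduct.tmul_mul_tmul, one_pow, one_mul, mul_one]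
    have minus : ∀ m : ZMod p,
        Rm (bessSum p (-Complex.I * (qh p)⁻¹ * lp) (-Complex.I * qh p * lm) (ηp p) (ηm p) m ⊗ₜ[ℂ]
          expAB (-(lp ^ p)) (-(lm ^ p))) =
        lm • (bessSum p (-Complex.I * (qh p)⁻¹ * lp) (-Complex.I * qh p * lm) (ηp p) (ηm p)
          (m + 1) ⊗ₜ[ℂ] expAB (-(lp ^ p)) (-(lm ^ p))) := by
      intro m
      have hs := scalar_identity hp (s := (qh p)⁻¹)
        (by rw [inv_pow, qh_pow hp.pos.ne', inv_neg, inv_one]) lm (qfact p (p - 1))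
      rw [inv_inv] at hs
      rw [bessSum_tmul, bessSum_tmul]
      refine hRm.map_bessSum_minus hp hp3 hK1 hK2 (hK4 _) hm2 hm1
        ?_ hyp (by linear_combination (-(qh p * (qh p)⁻¹ * lm)) * hI + lm * hh) hs m
      rw [hm4, dMinus_expAB, TensorProduct.tmul_smul, smul_smul, Algebra.TensorProduct.tmul_pow,
        Algebra.TensorProduct.tmul_mul_tmul, one_pow, one_mul, mul_one]
    refine ⟨fun m h1 hm => ?_, fun m hm => ?_, ?_, ?_⟩
    · rw [dm0_eq_bessSum lp lm (by omega), dm0_eq_bessSum lp lm (by omega), plus,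
        Nat.cast_sub h1, Nat.cast_one]
    · rw [dm0_eq_bessSum lp lm (by omega), dm0_eq_bessSum lp lm (by omega), minus,
        Nat.cast_add, Nat.cast_one]
    · rw [dm0_eq_bessSum lp lm (by omega), dm0_eq_bessSum lp lm (by omega), plus, hadd,
        Nat.cast_zero]
    · rw [dm0_eq_bessSum lp lm (by omega), dm0_eq_bessSum lp lm (by omega), minus, hadd,
        Nat.cast_zero, sub_add_cancel]
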